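/- arXiv:2407.20655 — 2 statements merged into one kernel-verified Lean document; each statement's English description precedes it below -/
import Mathlib

section
/- (Robust coercivity, Lemma 5.1.) For every admissible pair (τ,v), B_θ((τ,v),(τ,v)) = ∫_Ω ν|ε(v)|_F² dx + ∫_Ω ν^{-1}|Aτ|_F² dx + ∫_Ω (θ/ν)|∇·τ|² dx = |||(τ,v)|||_{eg,θ}², with equality holding exactly (coercivity constant 1, independent of ν and θ). -/
/-!
On the diagonal `χ = τ`, `w = v`, the mixed terms of `B_θ` cancel in pairs: `∓ 2∫⟨ε(v),τ⟩` and
`∓ ∫⟨Aτ,ε(v)⟩`. What remains is the energy, because `Aτ` is trace-free and hence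
Frobenius-orthogonal to the multiple of `I` by which `τ` and `Aτ` differ
(`fro_devM_self`): `⟨Aτ,τ⟩ = |Aτ|²`. The integrands of the energy are nonnegative on `Ω`, so the
square of the square root defining the norm gives the energy back.
-/

open MeasureTheory

noncomputable section

/-- Frobenius inner product of two `d × d` arrays. -/
def fro {d : ℕ} (S T : Fin d → Fin d → ℝ) : ℝ := ∑ i, ∑ j, S i j * T i j

/-- The deviatoric map `A M = M − (tr M / d) • I`. -/
def devM {d : ℕ} (M : Fin d → Fin d → ℝ) : Fin d → Fin d → ℝ :=
  fun i j => M i j - ((∑ k, M k k) / (d : ℝ)) * (if i = j then 1 else 0)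

/-- Partial derivative of a scalar field in the `j`-th coordinate direction. -/
def pd {d : ℕ} (f : (Fin d → ℝ) → ℝ) (x : Fin d → ℝ) (j : Fin d) : ℝ :=
  fderiv ℝ f x (Pi.single j 1)

/-- Jacobian matrix `(∂v_i/∂x_j)` of a vector field. -/
def jac {d : ℕ} (v : (Fin d → ℝ) → Fin d → ℝ) (x : Fin d → ℝ) : Fin d → Fin d → ℝ :=
  fun i j => pd (fun y => v y i) x j

/-- Symmetric gradient `ε(v) = (∇v + (∇v)^T)/2`. -/
def epsV {d : ℕ} (v : (Fin d → ℝ) → Fin d → ℝ) (x : Fin d → ℝ) : Fin d → Fin d → ℝ :=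
  fun i j => (jac v x i j + jac v x j i) / 2

/-- Row-wise divergence `(∇·τ)_i = Σ_j ∂_j τ_{ij}` of a matrix-valued field. -/
def divT {d : ℕ} (τ : (Fin d → ℝ) → Fin d → Fin d → ℝ) (x : Fin d → ℝ) (i : Fin d) : ℝ :=
  ∑ j, pd (fun y => τ y i j) x j

/-- A pair `(τ, v)` is admissible: `τ` is `C¹` on `Ω`, `v` is `C¹` with compact
support contained in `Ω`, and the four weighted integrals are finite. -/
def Admissible {d : ℕ} (Ω : Set (Fin d → ℝ)) (ν θ : (Fin d → ℝ) → ℝ)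
    (τ : (Fin d → ℝ) → Fin d → Fin d → ℝ) (v : (Fin d → ℝ) → Fin d → ℝ) : Prop :=
  (∀ i j, ContDiffOn ℝ 1 (fun x => τ x i j) Ω) ∧
    ContDiff ℝ 1 v ∧ HasCompactSupport v ∧ tsupport v ⊆ Ω ∧
    IntegrableOn (fun x => (ν x)⁻¹ * fro (τ x) (τ x)) Ω ∧
    IntegrableOn (fun x => ν x * fro (jac v x) (jac v x)) Ω ∧
    IntegrableOn (fun x => (ν x / θ x) * ∑ i, (v x i) ^ 2) Ω ∧
    IntegrableOn (fun x => (θ x / ν x) * ∑ i, (divT τ x i) ^ 2) Ω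

/-- The augmented (non-symmetric) bilinear form `B_θ`. -/
def Bform {d : ℕ} (Ω : Set (Fin d → ℝ)) (ν θ : (Fin d → ℝ) → ℝ)
    (χ : (Fin d → ℝ) → Fin d → Fin d → ℝ) (w : (Fin d → ℝ) → Fin d → ℝ)
    (τ : (Fin d → ℝ) → Fin d → Fin d → ℝ) (v : (Fin d → ℝ) → Fin d → ℝ) : ℝ :=
  (∫ x in Ω, (ν x)⁻¹ * fro (devM (χ x)) (τ x))
    - 2 * (∫ x in Ω, fro (epsV w x) (τ x))
    + 2 * (∫ x in Ω, fro (epsV v x) (χ x))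
    - (∫ x in Ω, fro (devM (χ x)) (epsV v x))
    + (∫ x in Ω, fro (devM (τ x)) (epsV w x))
    + (∫ x in Ω, ν x * fro (epsV w x) (epsV v x))
    + (∫ x in Ω, (θ x / ν x) * ∑ i, divT χ x i * divT τ x i)

/-- The weighted energy norm `|||(τ,v)|||_{eg,θ}`. -/
def normEg {d : ℕ} (Ω : Set (Fin d → ℝ)) (ν θ : (Fin d → ℝ) → ℝ)
    (τ : (Fin d → ℝ) → Fin d → Fin d → ℝ) (v : (Fin d → ℝ) → Fin d → ℝ) : ℝ :=
  Real.sqrt ((∫ x in Ω, ν x * fro (epsV v x) (epsV v x))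
    + (∫ x in Ω, (ν x)⁻¹ * fro (devM (τ x)) (devM (τ x)))
    + (∫ x in Ω, (θ x / ν x) * ∑ i, (divT τ x i) ^ 2))

/-- The weighted full norm `|||(τ,v)|||_{full,θ}`. -/
def normFull {d : ℕ} (Ω : Set (Fin d → ℝ)) (ν θ : (Fin d → ℝ) → ℝ)
    (τ : (Fin d → ℝ) → Fin d → Fin d → ℝ) (v : (Fin d → ℝ) → Fin d → ℝ) : ℝ :=
  Real.sqrt ((∫ x in Ω, ν x * fro (jac v x) (jac v x))
    + (∫ x in Ω, (ν x / θ x) * ∑ i, (v x i) ^ 2)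
    + (∫ x in Ω, (ν x)⁻¹ * fro (τ x) (τ x))
    + (∫ x in Ω, (θ x / ν x) * ∑ i, (divT τ x i) ^ 2))

lemma trace_devM {d : ℕ} (M : Fin d → Fin d → ℝ) : ∑ i, devM M i i = 0 := by
  rcases Nat.eq_zero_or_pos d with rfl | hd
  · simp
  · have hd' : (d : ℝ) ≠ 0 := by positivity
    simp only [devM, if_true, mul_one, Finset.sum_sub_distrib, Finset.sum_const,
      Finset.card_univ, Fintype.card_fin, nsmul_eq_mul]
    field_simp
    ring

/-- `A` acts as an orthogonal projection: `⟨AM, M⟩ = |AM|²`. -/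
lemma fro_devM_self {d : ℕ} (M : Fin d → Fin d → ℝ) :
    fro (devM M) M = fro (devM M) (devM M) := by
  set c : ℝ := (∑ k, M k k) / (d : ℝ) with hc
  have hM : ∀ i j, M i j = devM M i j + c * (if i = j then 1 else 0) := by
    intro i j
    simp only [devM, hc]
    ring
  calc fro (devM M) M
      = ∑ i, ∑ j, (devM M i j * devM M i j + devM M i j * (c * (if i = j then 1 else 0))) :=
        Finset.sum_congr rfl fun i _ => Finset.sum_congr rfl fun j _ => by
          rw [← mul_add, ← hM]
    _ = fro (devM M) (devM M) + (∑ i, devM M i i) * c := by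
        simp [fro, Finset.sum_add_distrib, Finset.sum_mul]
    _ = fro (devM M) (devM M) := by rw [trace_devM, zero_mul, add_zero]

lemma fro_self_nonneg {d : ℕ} (M : Fin d → Fin d → ℝ) : 0 ≤ fro M M :=
  Finset.sum_nonneg fun _ _ => Finset.sum_nonneg fun _ _ => mul_self_nonneg _

/-- Robust coercivity, Lemma 5.1:
`B_θ((τ,v),(τ,v)) = ∫ ν|ε(v)|² + ∫ ν⁻¹|Aτ|² + ∫ (θ/ν)|∇·τ|² = |||(τ,v)|||²_{eg,θ}`. -/
theorem stmt_7 (d : ℕ) (Ω : Set (Fin d → ℝ)) (hΩ : IsOpen Ω)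
    (ν θ : (Fin d → ℝ) → ℝ) (hνmeas : Measurable ν) (hθmeas : Measurable θ)
    (lam Lam θ₀ θ₁ : ℝ) (hlam : 0 < lam) (hνbd : ∀ x ∈ Ω, lam ≤ ν x ∧ ν x ≤ Lam)
    (hθ₀ : 0 < θ₀) (hθbd : ∀ x ∈ Ω, θ₀ ≤ θ x ∧ θ x ≤ θ₁)
    (τ : (Fin d → ℝ) → Fin d → Fin d → ℝ) (v : (Fin d → ℝ) → Fin d → ℝ)
    (hadm : Admissible Ω ν θ τ v) :
    Bform Ω ν θ τ v τ v =
        (∫ x in Ω, ν x * fro (epsV v x) (epsV v x))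
          + (∫ x in Ω, (ν x)⁻¹ * fro (devM (τ x)) (devM (τ x)))
          + (∫ x in Ω, (θ x / ν x) * ∑ i, (divT τ x i) ^ 2) ∧
      Bform Ω ν θ τ v τ v = (normEg Ω ν θ τ v) ^ 2 := by
  have hν : ∀ x ∈ Ω, 0 ≤ ν x := fun x hx => hlam.le.trans (hνbd x hx).1
  have hθ : ∀ x ∈ Ω, 0 ≤ θ x := fun x hx => hθ₀.le.trans (hθbd x hx).1
  have energy : Bform Ω ν θ τ v τ v =
      (∫ x in Ω, ν x * fro (epsV v x) (epsV v x))
        + (∫ x in Ω, (ν x)⁻¹ * fro (devM (τ x)) (devM (τ x)))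
        + (∫ x in Ω, (θ x / ν x) * ∑ i, (divT τ x i) ^ 2) := by
    simp only [Bform, fro_devM_self, pow_two]
    ring
  refine ⟨energy, ?_⟩
  rw [energy, normEg, Real.sq_sqrt]
  refine add_nonneg (add_nonneg ?_ ?_) ?_
  · exact setIntegral_nonneg hΩ.measurableSet fun x hx =>
      mul_nonneg (hν x hx) (fro_self_nonneg _)
  · exact setIntegral_nonneg hΩ.measurableSet fun x hx =>
      mul_nonneg (inv_nonneg.2 (hν x hx)) (fro_self_nonneg _)
  · exact setIntegral_nonneg hΩ.measurableSet fun x hx =>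
      mul_nonneg (div_nonneg (hθ x hx) (hν x hx)) (Finset.sum_nonneg fun _ _ => sq_nonneg _)
end
end

section
/- (Robust continuity, Lemma 5.2.) For all admissible pairs (χ,w) and (τ,v), B_θ((χ,w),(τ,v)) ≤ 2 |||(χ,w)|||_{eg,θ} · |||(τ,v)|||_{full,θ}, with the constant 2 independent of ν and θ. -/
/-!
The term `2 ∫ ⟨ε(v), χ⟩` involves all of `χ`, while the energy norm sees only `Aχ` and `∇·χ`.
Integrating by parts (`green`), one may subtract `2 ∫ (⟨∇v, χ⟩ + v · ∇·χ) = 0`, which replaces it by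
`- 2 ∫ ⟨ω(v), Aχ⟩ - 2 ∫ v · ∇·χ`. A direct use of the Cauchy-Schwarz inequality would still be too
lossy, because `|∇·τ - 2 (ν/θ) v|²` produces the constant `√5`. The cross term there,
`- 4 v · ∇·τ`, is integrated by parts as well and becomes `4 ⟨∇v, τ⟩`, which cancels the cross
terms of the remaining squares.

Cauchy-Schwarz is used in the form `B ≤ (s/2) E + (2/s) F` for every `s > 0` (`le_of_weighted`),
where `E` and `F` are the squared norms. This follows from the pointwise bounds `matrix_ineq` and
`vector_ineq`; the first splits into scalar inequalities along the orthogonal decomposition of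
matrices into symmetric deviatoric, skew and spherical parts (`fro_decomp`). All integrals converge
because the bounds on `ν` and `θ` put every field involved in `L²(Ω)`.
-/

open MeasureTheory

noncomputable section

/-! ### Pointwise inequalities -/

/-- Contribution of one entry of the symmetric deviatoric parts: `y, t, w, e` are entries of
`χ, τ, ε(w), ε(v)`. The left side is `n⁻¹ (y - n w)(t - n e)`. -/
lemma scalar_symm {n s : ℝ} (hn : 0 < n) (hs : 0 < s) (y t w e : ℝ) :
    n⁻¹ * (y * t) - w * t - y * e + n * (w * e) ≤
      s / 2 * (n * (w * w) + n⁻¹ * (y * y)) + 2 / s * (n * (e * e) + n⁻¹ * (t * t) - e * t) := by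
  have h : s / 2 * (n * (w * w) + n⁻¹ * (y * y)) + 2 / s * (n * (e * e) + n⁻¹ * (t * t) - e * t)
      - (n⁻¹ * (y * t) - w * t - y * e + n * (w * e)) =
      n⁻¹ * (s / 4 * ((y - n * w) - 2 * (t - n * e) / s) ^ 2 + s / 4 * (y + n * w) ^ 2
        + 1 / s * (t ^ 2 + n ^ 2 * e ^ 2)) := by
    field_simp
    ring
  have : 0 ≤ n⁻¹ * (s / 4 * ((y - n * w) - 2 * (t - n * e) / s) ^ 2 + s / 4 * (y + n * w) ^ 2
        + 1 / s * (t ^ 2 + n ^ 2 * e ^ 2)) := by positivity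
  linarith

/-- Contribution of one entry of the skew parts: `y, t, o` are entries of `χ, τ, ∇v`.
The right side leaves a surplus `3 n⁻¹ t² / (2 s)` after completing the square. -/
lemma scalar_skew {n s : ℝ} (hn : 0 < n) (hs : 0 < s) (y t o : ℝ) :
    n⁻¹ * (y * t) - 2 * (y * o) ≤
      s / 2 * (n⁻¹ * (y * y)) + 2 / s * (n * (o * o) + n⁻¹ * (t * t) - o * t) := by
  have h : s / 2 * (n⁻¹ * (y * y)) + 2 / s * (n * (o * o) + n⁻¹ * (t * t) - o * t)
      - (n⁻¹ * (y * t) - 2 * (y * o)) =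
      n⁻¹ * (s / 2 * (y - (t - 2 * n * o) / s) ^ 2 + 3 / (2 * s) * t ^ 2) := by
    field_simp
    ring
  have : 0 ≤ n⁻¹ * (s / 2 * (y - (t - 2 * n * o) / s) ^ 2 + 3 / (2 * s) * t ^ 2) := by positivity
  linarith

section

variable {d : ℕ}

/-- Trace of a `d × d` array. -/
def trM (M : Fin d → Fin d → ℝ) : ℝ := ∑ k, M k k

/-- Skew part of a `d × d` array. -/
def skewM (M : Fin d → Fin d → ℝ) : Fin d → Fin d → ℝ := fun i j => (M i j - M j i) / 2

/-- Symmetric part of a `d × d` array; `epsV v x` is `symM (jac v x)` by definition. -/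
def symM (M : Fin d → Fin d → ℝ) : Fin d → Fin d → ℝ := fun i j => (M i j + M j i) / 2

lemma fro_skew_add_sym (M N : Fin d → Fin d → ℝ) :
    fro M N = fro (symM M) (symM N) + fro (skewM M) (skewM N) := by
  have h : ∑ i, ∑ j, M i j * N i j = ∑ i, ∑ j, M j i * N j i := Finset.sum_comm
  have h2 : fro M N = (∑ i, ∑ j, M i j * N i j + ∑ i, ∑ j, M j i * N j i) / 2 := by
    rw [← h, fro]; ring
  rw [h2]
  simp only [fro, symM, skewM, ← Finset.sum_add_distrib, Finset.sum_div]
  refine Finset.sum_congr rfl fun i _ => Finset.sum_congr rfl fun j _ => ?_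
  ring

lemma trM_devM (M : Fin d → Fin d → ℝ) : trM (devM M) = 0 := by
  rcases Nat.eq_zero_or_pos d with rfl | hd
  · simp [trM]
  · have : (d : ℝ) ≠ 0 := by positivity
    simp [trM, devM, Finset.sum_sub_distrib]
    field_simp
    simp

lemma fro_dev_add_tr (M N : Fin d → Fin d → ℝ) :
    fro M N = fro (devM M) (devM N) + trM M * trM N / d := by
  rcases Nat.eq_zero_or_pos d with rfl | hd
  · simp [fro, trM]
  · have h0 : (d : ℝ) ≠ 0 := by positivity
    have h : ∀ i j, devM M i j * devM N i j = M i j * N i j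
        - (if i = j then trM M / d * N i j + trM N / d * M i j - trM M / d * (trM N / d) else 0) := by
      intro i j
      by_cases hij : i = j <;> simp [devM, trM, hij]
      ring
    simp only [fro, h, Finset.sum_sub_distrib, Finset.sum_ite_eq, Finset.mem_univ, if_true,
      Finset.sum_add_distrib, ← Finset.mul_sum]
    simp only [Finset.sum_const, Finset.card_univ, Fintype.card_fin, nsmul_eq_mul]
    change _ = _ - (trM M / d * trM N + trM N / d * trM M - _) + _
    field_simp
    ring

lemma trM_symM (M : Fin d → Fin d → ℝ) : trM (symM M) = trM M := by simp [trM, symM]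

lemma devM_devM (M : Fin d → Fin d → ℝ) : devM (devM M) = devM M := by
  have := trM_devM M
  unfold trM at this
  funext i j
  simp [devM] at this ⊢
  exact fun _ => Or.inl this

lemma symM_devM (M : Fin d → Fin d → ℝ) : symM (devM M) = devM (symM M) := by
  funext i j
  have : ∑ k, symM M k k = ∑ k, M k k := trM_symM M
  simp only [symM, devM] at this ⊢
  rw [this]
  by_cases h : i = j
  · simp [h]
  · simp [h, Ne.symm h]

lemma skewM_devM (M : Fin d → Fin d → ℝ) : skewM (devM M) = skewM M := by
  funext i j
  by_cases h : i = j
  · simp [skewM, h]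
  · simp [skewM, devM, h, Ne.symm h]

lemma symM_symM (M : Fin d → Fin d → ℝ) : symM (symM M) = symM M := by
  funext i j; simp only [symM]; ring

lemma skewM_symM (M : Fin d → Fin d → ℝ) : skewM (symM M) = 0 := by
  funext i j; simp only [symM, skewM, Pi.zero_apply]; ring

lemma fro_zero_left (M : Fin d → Fin d → ℝ) : fro 0 M = 0 := by simp [fro]
lemma fro_zero_right (M : Fin d → Fin d → ℝ) : fro M 0 = 0 := by simp [fro]

/-- Orthogonal splitting into symmetric deviatoric, skew and spherical parts. For `d = 0` all
terms vanish. -/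
lemma fro_decomp (M N : Fin d → Fin d → ℝ) :
    fro M N = fro (devM (symM M)) (devM (symM N)) + fro (skewM M) (skewM N)
      + trM M * trM N / d := by
  rw [fro_skew_add_sym, fro_dev_add_tr (symM M), trM_symM, trM_symM]; ring

lemma fro_symm_ineq {n s : ℝ} (hn : 0 < n) (hs : 0 < s) (Y T W E : Fin d → Fin d → ℝ) :
    n⁻¹ * fro Y T - fro W T - fro Y E + n * fro W E ≤
      s / 2 * (n * fro W W + n⁻¹ * fro Y Y)
        + 2 / s * (n * fro E E + n⁻¹ * fro T T - fro E T) := by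
  simp only [fro, Finset.mul_sum, ← Finset.sum_add_distrib, ← Finset.sum_sub_distrib]
  exact Finset.sum_le_sum fun i _ => Finset.sum_le_sum fun j _ => scalar_symm hn hs _ _ _ _

lemma fro_skew_ineq {n s : ℝ} (hn : 0 < n) (hs : 0 < s) (Y T O : Fin d → Fin d → ℝ) :
    n⁻¹ * fro Y T - 2 * fro Y O ≤
      s / 2 * (n⁻¹ * fro Y Y) + 2 / s * (n * fro O O + n⁻¹ * fro T T - fro O T) := by
  simp only [fro, Finset.mul_sum, ← Finset.sum_add_distrib, ← Finset.sum_sub_distrib]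
  exact Finset.sum_le_sum fun i _ => Finset.sum_le_sum fun j _ => scalar_skew hn hs _ _ _

/-- Contribution of the traces of `ε(w), τ, ∇v`; it also serves for the divergence terms. -/
lemma scalar_trace {n s : ℝ} (hn : 0 < n) (hs : 0 < s) (h c k : ℝ) :
    n * (h * k) - 2 * (h * c) ≤
      s / 2 * (n * (h * h)) + 2 / s * (n * (k * k) + n⁻¹ * (c * c) - k * c) := by
  have := scalar_skew (inv_pos.2 hn) hs h k c
  rw [inv_inv] at this
  linarith

/-- Pointwise bound for the matrix terms, with `X, T, J, K` the values of `χ, τ, ∇v, ∇w`. The terms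
`- 2 ⟨J, X⟩` and `- ⟨J, T⟩` are the matrix parts of the null Lagrangians `⟨∇v, χ⟩ + v · ∇·χ` and
`⟨∇v, τ⟩ + v · ∇·τ`; their vector parts occur in `vector_ineq`. -/
lemma matrix_ineq {n s : ℝ} (hn : 0 < n) (hs : 0 < s) (X T J K : Fin d → Fin d → ℝ) :
    n⁻¹ * fro (devM X) T - 2 * fro (symM K) T + 2 * fro (symM J) X - fro (devM X) (symM J)
        + fro (devM T) (symM K) + n * fro (symM K) (symM J) - 2 * fro J X ≤
      s / 2 * (n * fro (symM K) (symM K) + n⁻¹ * fro (devM X) (devM X))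
        + 2 / s * (n * fro J J + n⁻¹ * fro T T - fro J T) := by
  rw [fro_decomp (devM X) T, fro_decomp (symM K) T, fro_decomp (symM J) X,
    fro_decomp (devM X) (symM J), fro_decomp (devM T) (symM K), fro_decomp (symM K) (symM J),
    fro_decomp J X, fro_decomp (symM K) (symM K), fro_decomp (devM X) (devM X),
    fro_decomp J J, fro_decomp T T, fro_decomp J T]
  simp only [symM_devM, skewM_devM, symM_symM, skewM_symM, devM_devM, trM_devM, trM_symM,
    fro_zero_left, fro_zero_right]
  have h1 := fro_symm_ineq hn hs (devM (symM X)) (devM (symM T)) (devM (symM K)) (devM (symM J))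
  have h2 := fro_skew_ineq hn hs (skewM X) (skewM T) (skewM J)
  have h3 := mul_le_mul_of_nonneg_right (scalar_trace hn hs (trM K) (trM T) (trM J))
    (inv_nonneg.2 (Nat.cast_nonneg (α := ℝ) d))
  have c1 : fro (devM (symM T)) (devM (symM K)) = fro (devM (symM K)) (devM (symM T)) := by
    simp only [fro, mul_comm]
  have c2 : fro (skewM J) (skewM X) = fro (skewM X) (skewM J) := by
    simp only [fro, mul_comm]
  rw [c1, c2]
  refine (sub_nonneg.1 ?_)
  refine (add_nonneg (add_nonneg (sub_nonneg.2 h1) (sub_nonneg.2 h2)) (sub_nonneg.2 h3)).trans_eq ?_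
  simp only [div_eq_mul_inv]
  ring

/-- Pointwise bound for the divergence terms, with `a, b, u` the values of `∇·χ, ∇·τ, v` and
`m = θ / ν`. -/
lemma vector_ineq {m s : ℝ} (hm : 0 < m) (hs : 0 < s) (a b u : Fin d → ℝ) :
    m * ∑ i, a i * b i - 2 * ∑ i, u i * a i ≤
      s / 2 * (m * ∑ i, a i ^ 2)
        + 2 / s * (m⁻¹ * ∑ i, u i ^ 2 + m * ∑ i, b i ^ 2 - ∑ i, u i * b i) := by
  simp only [Finset.mul_sum, ← Finset.sum_add_distrib, ← Finset.sum_sub_distrib]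
  refine Finset.sum_le_sum fun i _ => ?_
  have := scalar_trace hm hs (a i) (u i) (b i)
  calc _ = m * (a i * b i) - 2 * (a i * u i) := by ring
    _ ≤ _ := this
    _ = _ := by ring

/-- Optimizing over the weight `s`; near-optimal values of `s` are used so that `E = 0` and
`F = 0` need no separate treatment. -/
lemma le_of_weighted {B E F : ℝ} (hE : 0 ≤ E) (hF : 0 ≤ F)
    (h : ∀ s : ℝ, 0 < s → B ≤ s / 2 * E + 2 / s * F) : B ≤ 2 * √E * √F := by
  obtain ⟨a, ha, rfl⟩ : ∃ a, 0 ≤ a ∧ E = a ^ 2 := ⟨√E, by positivity, (Real.sq_sqrt hE).symm⟩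
  obtain ⟨b, hb, rfl⟩ : ∃ a, 0 ≤ a ∧ F = a ^ 2 := ⟨√F, by positivity, (Real.sq_sqrt hF).symm⟩
  rw [Real.sqrt_sq ha, Real.sqrt_sq hb]
  refine le_of_forall_pos_le_add fun η hη => ?_
  set δ := η / (a + b + 1) with hδ
  have hδ0 : 0 < δ := by positivity
  have hδ1 : δ * (a + b + 1) = η := by rw [hδ]; field_simp
  have := h (2 * (b + δ) / (a + δ)) (by positivity)
  have e1 : 2 * (b + δ) / (a + δ) / 2 * a ^ 2 ≤ (b + δ) * a := by
    rw [show 2 * (b + δ) / (a + δ) / 2 * a ^ 2 = ((b + δ) * a) * a / (a + δ) by ring,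
      div_le_iff₀ (by positivity)]
    gcongr; linarith
  have e2 : 2 / (2 * (b + δ) / (a + δ)) * b ^ 2 ≤ (a + δ) * b := by
    rw [show 2 / (2 * (b + δ) / (a + δ)) * b ^ 2 = ((a + δ) * b) * b / (b + δ) by field_simp,
      div_le_iff₀ (by positivity)]
    gcongr; linarith
  nlinarith

/-! ### Integration by parts -/

lemma integral_pd_eq_zero (g : (Fin d → ℝ) → ℝ) (hg : ContDiff ℝ 1 g)
    (hc : HasCompactSupport g) (j : Fin d) :
    Integrable (fun x => pd g x j) ∧ ∫ x, pd g x j = 0 := by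
  have hc' : HasCompactSupport fun x => fderiv ℝ g x (Pi.single j 1) := hc.fderiv_apply ℝ _
  have hcont : Continuous fun x => fderiv ℝ g x (Pi.single j 1) :=
    (hg.continuous_fderiv one_ne_zero).clm_apply continuous_const
  have h := integral_mul_fderiv_eq_neg_fderiv_mul_of_integrable (𝕜 := ℝ) (μ := volume)
    (f := fun _ : Fin d → ℝ => (1 : ℝ)) (g := g) (v := Pi.single j 1)
    (by simp) (by simpa using hcont.integrable_of_hasCompactSupport hc')
    (by simpa using hg.continuous.integrable_of_hasCompactSupport hc)
    (fun x _ => differentiableAt_const _)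
    (fun x _ => hg.differentiable one_ne_zero x)
  exact ⟨hcont.integrable_of_hasCompactSupport hc', by simpa [pd] using h⟩

/-- The product `f t` extends by zero to a compactly supported `C¹` function on the whole space,
although `t` is only regular on `Ω`. -/
lemma integral_leibniz_eq_zero {Ω : Set (Fin d → ℝ)} (hΩ : IsOpen Ω) {f t : (Fin d → ℝ) → ℝ}
    (hf : ContDiff ℝ 1 f) (hc : HasCompactSupport f) (hs : tsupport f ⊆ Ω)
    (ht : ContDiffOn ℝ 1 t Ω) (j : Fin d) :
    IntegrableOn (fun x => pd f x j * t x + f x * pd t x j) Ω ∧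
      ∫ x in Ω, (pd f x j * t x + f x * pd t x j) = 0 := by
  have hzero : ∀ x ∉ tsupport f, (fun x => f x * t x) =ᶠ[nhds x] fun _ => 0 := by
    intro x hx
    filter_upwards [notMem_tsupport_iff_eventuallyEq.1 hx] with y hy
    simp [hy]
  have hg : ContDiff ℝ 1 fun x => f x * t x := by
    rw [contDiff_iff_contDiffAt]
    intro x
    by_cases hx : x ∈ tsupport f
    · exact hf.contDiffAt.mul (ht.contDiffAt (hΩ.mem_nhds (hs hx)))
    · exact contDiffAt_const.congr_of_eventuallyEq (hzero x hx)
  obtain ⟨hint, hval⟩ := integral_pd_eq_zero _ hg hc.mul_right j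
  have heq : Set.EqOn (fun x => pd (fun x => f x * t x) x j)
      (fun x => pd f x j * t x + f x * pd t x j) Ω := by
    intro x hx
    have h1 : DifferentiableAt ℝ f x := hf.differentiable one_ne_zero x
    have h2 : DifferentiableAt ℝ t x :=
      (ht.contDiffAt (hΩ.mem_nhds hx)).differentiableAt one_ne_zero
    simp only [pd]
    rw [fderiv_fun_mul h1 h2]
    simp
    ring
  refine ⟨hint.integrableOn.congr_fun heq hΩ.measurableSet, ?_⟩
  rw [← setIntegral_congr_fun hΩ.measurableSet heq,
    setIntegral_eq_integral_of_forall_compl_eq_zero, hval]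
  intro x hx
  simp [pd, (hzero x fun h => hx (hs h)).fderiv_eq]

/-! ### Square integrability -/

/-- All entries of `τ`, `∇v`, `v` and `∇·τ` are square integrable on `Ω`, without weights. -/
structure L2Data (Ω : Set (Fin d → ℝ)) (τ : (Fin d → ℝ) → Fin d → Fin d → ℝ)
    (v : (Fin d → ℝ) → Fin d → ℝ) : Prop where
  tau : ∀ i j, MemLp (fun x => τ x i j) 2 (volume.restrict Ω)
  jacobian : ∀ i j, MemLp (fun x => jac v x i j) 2 (volume.restrict Ω)
  vel : ∀ i, MemLp (fun x => v x i) 2 (volume.restrict Ω)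
  div : ∀ i, MemLp (fun x => divT τ x i) 2 (volume.restrict Ω)

/-- A weight bounded below by `c > 0` can be dropped in a square-integrability hypothesis. -/
lemma memLp_of_weighted {Ω : Set (Fin d → ℝ)} (hΩ : IsOpen Ω) {f k q : (Fin d → ℝ) → ℝ} {c : ℝ}
    (hc : 0 < c) (hf : ContinuousOn f Ω) (hk : ∀ x ∈ Ω, c ≤ k x) (hq : ∀ x ∈ Ω, f x ^ 2 ≤ q x)
    (hi : IntegrableOn (fun x => k x * q x) Ω) : MemLp f 2 (volume.restrict Ω) := by
  have hm := hf.aestronglyMeasurable (μ := volume) hΩ.measurableSet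
  rw [memLp_two_iff_integrable_sq hm]
  refine (hi.const_mul c⁻¹).mono' (hm.pow 2) (ae_restrict_of_forall_mem hΩ.measurableSet ?_)
  intro x hx
  rw [Real.norm_of_nonneg (sq_nonneg _), ← div_eq_inv_mul, le_div_iff₀ hc]
  have h1 := hk x hx
  have h2 := hq x hx
  nlinarith [sq_nonneg (f x)]

lemma sq_le_fro (M : Fin d → Fin d → ℝ) (i j : Fin d) : M i j ^ 2 ≤ fro M M := by
  calc M i j ^ 2 = M i j * M i j := sq _
    _ ≤ ∑ j, M i j * M i j :=
      Finset.single_le_sum (f := fun j => M i j * M i j) (fun j _ => mul_self_nonneg _)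
        (Finset.mem_univ j)
    _ ≤ fro M M := Finset.single_le_sum (f := fun i => ∑ j, M i j * M i j)
        (fun i _ => Finset.sum_nonneg fun j _ => mul_self_nonneg _) (Finset.mem_univ i)

lemma continuousOn_pd {Ω : Set (Fin d → ℝ)} (hΩ : IsOpen Ω) {t : (Fin d → ℝ) → ℝ}
    (ht : ContDiffOn ℝ 1 t Ω) (j : Fin d) : ContinuousOn (fun x => pd t x j) Ω :=
  (ht.continuousOn_fderiv_of_isOpen hΩ le_rfl).clm_apply continuousOn_const

lemma Admissible.l2Data {Ω : Set (Fin d → ℝ)} (hΩ : IsOpen Ω) {ν θ : (Fin d → ℝ) → ℝ}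
    {lam Lam θ₀ θ₁ : ℝ} (hlam : 0 < lam) (hνbd : ∀ x ∈ Ω, lam ≤ ν x ∧ ν x ≤ Lam)
    (hθ₀ : 0 < θ₀) (hθbd : ∀ x ∈ Ω, θ₀ ≤ θ x ∧ θ x ≤ θ₁)
    {τ : (Fin d → ℝ) → Fin d → Fin d → ℝ} {v : (Fin d → ℝ) → Fin d → ℝ}
    (h : Admissible Ω ν θ τ v) : L2Data Ω τ v := by
  rcases Ω.eq_empty_or_nonempty with rfl | ⟨x₀, hx₀⟩
  · constructor <;> simp
  have hLam : 0 < Lam := hlam.trans_le ((hνbd x₀ hx₀).1.trans (hνbd x₀ hx₀).2)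
  have hθ₁ : 0 < θ₁ := hθ₀.trans_le ((hθbd x₀ hx₀).1.trans (hθbd x₀ hx₀).2)
  have hν0 : ∀ x ∈ Ω, 0 < ν x := fun x hx => hlam.trans_le (hνbd x hx).1
  have hθ0 : ∀ x ∈ Ω, 0 < θ x := fun x hx => hθ₀.trans_le (hθbd x hx).1
  obtain ⟨hτ, hv, -, -, i1, i2, i3, i4⟩ := h
  have hvi : ∀ i, ContDiff ℝ 1 fun x => v x i := contDiff_pi.1 hv
  constructor
  · intro i j
    exact memLp_of_weighted hΩ (inv_pos.2 hLam) (hτ i j).continuousOn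
      (fun x hx => inv_anti₀ (hν0 x hx) (hνbd x hx).2) (fun x _ => sq_le_fro _ i j) i1
  · intro i j
    exact memLp_of_weighted hΩ hlam (continuousOn_pd hΩ (hvi i).contDiffOn j)
      (fun x hx => (hνbd x hx).1) (fun x _ => sq_le_fro _ i j) i2
  · intro i
    exact memLp_of_weighted hΩ (div_pos hlam hθ₁) (hvi i).continuous.continuousOn
      (fun x hx => div_le_div₀ (hν0 x hx).le (hνbd x hx).1 (hθ0 x hx) (hθbd x hx).2)
      (fun x _ => Finset.single_le_sum (f := fun i => v x i ^ 2) (fun i _ => sq_nonneg _)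
        (Finset.mem_univ i)) i3
  · intro i
    exact memLp_of_weighted hΩ (div_pos hθ₀ hLam)
      (continuousOn_finsetSum _ fun j _ => continuousOn_pd hΩ (hτ i j) j)
      (fun x hx => div_le_div₀ (hθ0 x hx).le (hθbd x hx).1 (hν0 x hx) (hνbd x hx).2)
      (fun x _ => Finset.single_le_sum (f := fun i => divT τ x i ^ 2) (fun i _ => sq_nonneg _)
        (Finset.mem_univ i)) i4

lemma memLp_devM {μ : Measure (Fin d → ℝ)} {S : (Fin d → ℝ) → Fin d → Fin d → ℝ}
    (hS : ∀ i j, MemLp (fun x => S x i j) 2 μ) (i j : Fin d) :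
    MemLp (fun x => devM (S x) i j) 2 μ := by
  have h : MemLp (fun x => ∑ k, S x k k) 2 μ := memLp_finsetSum _ fun k _ => hS k k
  convert (hS i j).sub (h.const_mul ((d : ℝ)⁻¹ * if i = j then 1 else 0)) using 2 with x
  simp only [devM, div_eq_mul_inv, Pi.sub_apply]
  ring

lemma memLp_epsV {μ : Measure (Fin d → ℝ)} {v : (Fin d → ℝ) → Fin d → ℝ}
    (hv : ∀ i j, MemLp (fun x => jac v x i j) 2 μ) (i j : Fin d) :
    MemLp (fun x => epsV v x i j) 2 μ := by
  convert ((hv i j).add (hv j i)).const_mul (2 : ℝ)⁻¹ using 2 with x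
  simp [epsV]; ring

lemma integrable_fro {μ : Measure (Fin d → ℝ)} {S T : (Fin d → ℝ) → Fin d → Fin d → ℝ}
    (hS : ∀ i j, MemLp (fun x => S x i j) 2 μ) (hT : ∀ i j, MemLp (fun x => T x i j) 2 μ) :
    Integrable (fun x => fro (S x) (T x)) μ :=
  integrable_finsetSum _ fun i _ => integrable_finsetSum _ fun j _ =>
    (hS i j).integrable_mul (hT i j)

lemma integrable_dot {μ : Measure (Fin d → ℝ)} {a b : (Fin d → ℝ) → Fin d → ℝ}
    (ha : ∀ i, MemLp (fun x => a x i) 2 μ) (hb : ∀ i, MemLp (fun x => b x i) 2 μ) :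
    Integrable (fun x => ∑ i, a x i * b x i) μ :=
  integrable_finsetSum _ fun i _ => (ha i).integrable_mul (hb i)

/-- Integration by parts: `∫ ⟨∇v, τ⟩ + ∫ v · (∇·τ) = 0` for compactly supported `v`. -/
lemma green {Ω : Set (Fin d → ℝ)} (hΩ : IsOpen Ω) {τ : (Fin d → ℝ) → Fin d → Fin d → ℝ}
    {v : (Fin d → ℝ) → Fin d → ℝ} (hτ : ∀ i j, ContDiffOn ℝ 1 (fun x => τ x i j) Ω)
    (hv : ContDiff ℝ 1 v) (hc : HasCompactSupport v) (hs : tsupport v ⊆ Ω) :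
    ∫ x in Ω, (fro (jac v x) (τ x) + ∑ i, v x i * divT τ x i) = 0 := by
  have hvi : ∀ i, ContDiff ℝ 1 fun x => v x i := contDiff_pi.1 hv
  have hsub : ∀ i, Function.support (fun x => v x i) ⊆ Function.support v := by
    intro i x hx h0
    exact hx (by simp [h0])
  have hci : ∀ i, HasCompactSupport fun x => v x i := fun i => hc.mono (hsub i)
  have hsi : ∀ i, tsupport (fun x => v x i) ⊆ Ω := fun i => (closure_mono (hsub i)).trans hs
  have e : ∀ x, fro (jac v x) (τ x) + ∑ i, v x i * divT τ x i =
      ∑ i, ∑ j, (pd (fun y => v y i) x j * τ x i j + v x i * pd (fun y => τ y i j) x j) := by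
    intro x
    simp only [fro, jac, divT, Finset.mul_sum, ← Finset.sum_add_distrib]
  simp only [e]
  have key := fun i j => integral_leibniz_eq_zero hΩ (hvi i) (hci i) (hsi i) (hτ i j) j
  rw [integral_finsetSum _ fun i _ => integrable_finsetSum _ fun j _ => (key i j).1]
  refine Finset.sum_eq_zero fun i _ => ?_
  rw [integral_finsetSum _ fun j _ => (key i j).1]
  exact Finset.sum_eq_zero fun j _ => (key i j).2

/-! ### Combining the integrals -/

/-- `f` is integrable with integral `c`; used to integrate linear combinations termwise. -/
structure HasInt (μ : Measure (Fin d → ℝ)) (f : (Fin d → ℝ) → ℝ) (c : ℝ) : Prop where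
  integrable : Integrable f μ
  integral_eq : ∫ x, f x ∂μ = c

namespace HasInt

variable {μ : Measure (Fin d → ℝ)} {f g : (Fin d → ℝ) → ℝ} {a b : ℝ}

lemma of (hf : Integrable f μ) : HasInt μ f (∫ x, f x ∂μ) := ⟨hf, rfl⟩

lemma add (hf : HasInt μ f a) (hg : HasInt μ g b) : HasInt μ (fun x => f x + g x) (a + b) :=
  ⟨hf.1.add hg.1, by rw [integral_add hf.1 hg.1, hf.2, hg.2]⟩

lemma sub (hf : HasInt μ f a) (hg : HasInt μ g b) : HasInt μ (fun x => f x - g x) (a - b) :=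
  ⟨hf.1.sub hg.1, by rw [integral_sub hf.1 hg.1, hf.2, hg.2]⟩

lemma const_mul (hf : HasInt μ f a) (c : ℝ) : HasInt μ (fun x => c * f x) (c * a) :=
  ⟨hf.1.const_mul c, by rw [integral_const_mul, hf.2]⟩

end HasInt

end

/-- Robust continuity, Lemma 5.2:
`B_θ((χ,w),(τ,v)) ≤ 2 |||(χ,w)|||_{eg,θ} · |||(τ,v)|||_{full,θ}`. -/
theorem stmt_8 (d : ℕ) (Ω : Set (Fin d → ℝ)) (hΩ : IsOpen Ω)
    (ν θ : (Fin d → ℝ) → ℝ) (hνmeas : Measurable ν) (hθmeas : Measurable θ)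
    (lam Lam θ₀ θ₁ : ℝ) (hlam : 0 < lam) (hνbd : ∀ x ∈ Ω, lam ≤ ν x ∧ ν x ≤ Lam)
    (hθ₀ : 0 < θ₀) (hθbd : ∀ x ∈ Ω, θ₀ ≤ θ x ∧ θ x ≤ θ₁)
    (χ : (Fin d → ℝ) → Fin d → Fin d → ℝ) (w : (Fin d → ℝ) → Fin d → ℝ)
    (τ : (Fin d → ℝ) → Fin d → Fin d → ℝ) (v : (Fin d → ℝ) → Fin d → ℝ)
    (hadm₁ : Admissible Ω ν θ χ w) (hadm₂ : Admissible Ω ν θ τ v) :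
    Bform Ω ν θ χ w τ v ≤ 2 * normEg Ω ν θ χ w * normFull Ω ν θ τ v := by
  have hν0 : ∀ x ∈ Ω, 0 < ν x := fun x hx => hlam.trans_le (hνbd x hx).1
  have hθ0 : ∀ x ∈ Ω, 0 < θ x := fun x hx => hθ₀.trans_le (hθbd x hx).1
  have L₁ := hadm₁.l2Data hΩ hlam hνbd hθ₀ hθbd
  have L₂ := hadm₂.l2Data hΩ hlam hνbd hθ₀ hθbd
  obtain ⟨hχ, -, -, -, -, -, -, iχdiv⟩ := hadm₁
  obtain ⟨hτ, hv, hvc, hvs, iτ, iv, iv0, iτdiv⟩ := hadm₂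
  have wν : ∀ {f : (Fin d → ℝ) → ℝ}, IntegrableOn f Ω → IntegrableOn (fun x => ν x * f x) Ω := by
    intro f hf
    refine Integrable.bdd_mul (c := Lam) hf hνmeas.aestronglyMeasurable
      (ae_restrict_of_forall_mem hΩ.measurableSet fun x hx => ?_)
    rw [Real.norm_of_nonneg (hν0 x hx).le]
    exact (hνbd x hx).2
  have wν' : ∀ {f : (Fin d → ℝ) → ℝ}, IntegrableOn f Ω →
      IntegrableOn (fun x => (ν x)⁻¹ * f x) Ω := by
    intro f hf
    refine Integrable.bdd_mul (c := lam⁻¹) hf hνmeas.inv.aestronglyMeasurable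
      (ae_restrict_of_forall_mem hΩ.measurableSet fun x hx => ?_)
    rw [Real.norm_of_nonneg (inv_pos.2 (hν0 x hx)).le]
    exact inv_anti₀ hlam (hνbd x hx).1
  have wθ : ∀ {f : (Fin d → ℝ) → ℝ}, IntegrableOn f Ω →
      IntegrableOn (fun x => (θ x / ν x) * f x) Ω := by
    intro f hf
    refine Integrable.bdd_mul (c := θ₁ / lam) hf (hθmeas.div hνmeas).aestronglyMeasurable
      (ae_restrict_of_forall_mem hΩ.measurableSet fun x hx => ?_)
    rw [Real.norm_of_nonneg (div_pos (hθ0 x hx) (hν0 x hx)).le]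
    exact div_le_div₀ ((hθ0 x hx).le.trans (hθbd x hx).2) (hθbd x hx).2 hlam (hνbd x hx).1
  have Aχ := memLp_devM L₁.tau
  have Aτ := memLp_devM L₂.tau
  have εw := memLp_epsV L₁.jacobian
  have εv := memLp_epsV L₂.jacobian
  have hB := ((((((HasInt.of (wν' (integrable_fro Aχ L₂.tau))).sub
    ((HasInt.of (integrable_fro εw L₂.tau)).const_mul 2)).add
    ((HasInt.of (integrable_fro εv L₁.tau)).const_mul 2)).sub
    (HasInt.of (integrable_fro Aχ εv))).add
    (HasInt.of (integrable_fro Aτ εw))).add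
    (HasInt.of (wν (integrable_fro εw εv)))).add
    (HasInt.of (wθ (integrable_dot L₁.div L₂.div)))
  have hE := ((HasInt.of (wν (integrable_fro εw εw))).add
    (HasInt.of (wν' (integrable_fro Aχ Aχ)))).add (HasInt.of iχdiv)
  have hF := (((HasInt.of iv).add (HasInt.of iv0)).add (HasInt.of iτ)).add (HasInt.of iτdiv)
  have hRχ : HasInt (volume.restrict Ω)
      (fun x => fro (jac v x) (χ x) + ∑ i, v x i * divT χ x i) 0 :=
    ⟨(integrable_fro L₂.jacobian L₁.tau).add (integrable_dot L₂.vel L₁.div),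
      green hΩ hχ hv hvc hvs⟩
  have hRτ : HasInt (volume.restrict Ω)
      (fun x => fro (jac v x) (τ x) + ∑ i, v x i * divT τ x i) 0 :=
    ⟨(integrable_fro L₂.jacobian L₂.tau).add (integrable_dot L₂.vel L₂.div),
      green hΩ hτ hv hvc hvs⟩
  have fro_nonneg : ∀ M : Fin d → Fin d → ℝ, 0 ≤ fro M M := fun M =>
    Finset.sum_nonneg fun i _ => Finset.sum_nonneg fun j _ => mul_self_nonneg _
  refine le_of_weighted ?_ ?_ fun s hs => ?_
  · rw [← hE.2]
    refine setIntegral_nonneg hΩ.measurableSet fun x hx => ?_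
    have := hν0 x hx
    have := hθ0 x hx
    have := fro_nonneg (epsV w x)
    have := fro_nonneg (devM (χ x))
    positivity
  · rw [← hF.2]
    refine setIntegral_nonneg hΩ.measurableSet fun x hx => ?_
    have := hν0 x hx
    have := hθ0 x hx
    have := fro_nonneg (jac v x)
    have := fro_nonneg (τ x)
    positivity
  -- Subtracting the two fields with zero integral turns the pointwise bounds into the claim.
  · have hL := hB.sub (hRχ.const_mul 2)
    have hR := (hE.const_mul (s / 2)).add ((hF.sub hRτ).const_mul (2 / s))
    have hmono := setIntegral_mono_on hL.1 hR.1 hΩ.measurableSet fun x hx => ?_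
    · rw [hL.2, hR.2, mul_zero, sub_zero, sub_zero] at hmono
      exact hmono
    · have h1 := matrix_ineq (hν0 x hx) hs (χ x) (τ x) (jac v x) (jac w x)
      have h2 := vector_ineq (div_pos (hθ0 x hx) (hν0 x hx)) hs (divT χ x) (divT τ x) (v x)
      rw [inv_div] at h2
      -- `epsV v x` and `symM (jac v x)` agree definitionally.
      change (ν x)⁻¹ * fro (devM (χ x)) (τ x) - 2 * fro (epsV w x) (τ x)
        + 2 * fro (epsV v x) (χ x) - fro (devM (χ x)) (epsV v x)
        + fro (devM (τ x)) (epsV w x) + ν x * fro (epsV w x) (epsV v x)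
        - 2 * fro (jac v x) (χ x) ≤ s / 2 * (ν x * fro (epsV w x) (epsV w x)
        + (ν x)⁻¹ * fro (devM (χ x)) (devM (χ x))) + _ at h1
      refine le_trans (le_of_eq ?_) ((add_le_add h1 h2).trans_eq ?_) <;> ring
end
end
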